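/- Let A : Matrix (Fin n) (Fin n) ℂ have pairwise distinct eigenvalues λ : Fin n → ℂ with corresponding left eigenvectors w : Fin n → (Fin n → ℂ) (w j ≠ 0 and Matrix.vecMul (w j) A = λ j • w j for every j), and let S ⊆ Fin n be any set such that for every j : Fin n there exists k ∈ S with w j k ≠ 0 (i.e., S corresponds to a, possibly non-minimal, set cover of the sets S_i = {j : w j i ≠ 0}). Then there exists b : Fin n → ℂ with support contained in S such that the pair (A, b) is controllable. -/

import Mathlib

open Matrix

/-- The pair `(A, b)` is controllable if the Kalman rank condition holds:
the span of `A ^ k *ᵥ b`, `k = 0, …, n-1`, is all of `Fin n → ℂ`. -/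
def Controllable {n : ℕ} (A : Matrix (Fin n) (Fin n) ℂ) (b : Fin n → ℂ) : Prop :=
  Submodule.span ℂ (Set.range fun k : Fin n => (A ^ (k : ℕ)) *ᵥ b) = ⊤

/-!
The powers of `A` act on a left eigenvector `w j` by scalars, so pairing `∑ k, c k • A ^ k *ᵥ b`
with `w j` gives `(∑ k, lam j ^ k * c k) * (w j ⬝ᵥ b)`. If no `w j ⬝ᵥ b` vanishes, a linear relation
among the vectors `A ^ k *ᵥ b` is thus annihilated by the Vandermonde matrix of the distinct
eigenvalues, hence is trivial. A suitable `b` exists because a vector space over an infinite field,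
here that of vectors supported in `S`, is not covered by finitely many proper subspaces.
-/

section

variable {R K ι κ : Type*} [Fintype ι]

theorem exists_support_subset_forall_dotProduct_ne_zero [Field K] [Infinite K] [Finite κ]
    {w : κ → ι → K} {S : Set ι} (hS : ∀ j, ∃ k ∈ S, w j k ≠ 0) :
    ∃ b : ι → K, Function.support b ⊆ S ∧ ∀ j, w j ⬝ᵥ b ≠ 0 := by
  classical
  let supportedIn : Submodule K (ι → K) := Submodule.pi Sᶜ fun _ => ⊥
  have exists_ne_zero (j : κ) : ∃ b ∈ supportedIn, dotProductBilin K K (w j) b ≠ 0 := by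
    obtain ⟨k, hkS, hk⟩ := hS j
    refine ⟨Pi.single k 1, fun i hi => ?_, by simpa using hk⟩
    exact Pi.single_eq_of_ne (ne_of_mem_of_not_mem hkS hi).symm 1
  obtain ⟨b, hbS, hb⟩ :=
    Module.Dual.exists_forall_mem_ne_zero_of_forall_exists supportedIn _ exists_ne_zero
  exact ⟨b, fun i hi => by_contra fun hiS => hi (hbS i hiS), hb⟩

variable [DecidableEq ι]

theorem vecMul_pow_eq_pow_smul [CommSemiring R] {A : Matrix ι ι R} {w : ι → R} {μ : R}
    (hw : w ᵥ* A = μ • w) (k : ℕ) : w ᵥ* A ^ k = μ ^ k • w := by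
  induction k with
  | zero => simp
  | succ k ih => rw [pow_succ, ← vecMul_vecMul, ih, smul_vecMul, hw, smul_smul, pow_succ]

theorem dotProduct_sum_smul_pow_mulVec [CommSemiring R] [Fintype κ] {A : Matrix ι ι R} {w : ι → R}
    {μ : R} (hw : w ᵥ* A = μ • w) (b : ι → R) (c : κ → R) (e : κ → ℕ) :
    w ⬝ᵥ ∑ k, c k • (A ^ e k *ᵥ b) = (∑ k, μ ^ e k * c k) * (w ⬝ᵥ b) := by
  simp only [dotProduct_sum, dotProduct_smul, dotProduct_mulVec, vecMul_pow_eq_pow_smul hw,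
    smul_dotProduct, smul_eq_mul, Finset.sum_mul]
  exact Finset.sum_congr rfl fun k _ => by ring

theorem linearIndependent_pow_mulVec_of_dotProduct_ne_zero [CommRing R] [IsDomain R] {m : ℕ}
    {A : Matrix ι ι R} {lam : Fin m → R} {w : Fin m → ι → R} {b : ι → R}
    (hlam : Function.Injective lam) (heig : ∀ j, w j ᵥ* A = lam j • w j) (hb : ∀ j, w j ⬝ᵥ b ≠ 0) :
    LinearIndependent R fun k : Fin m => A ^ (k : ℕ) *ᵥ b := by
  rw [Fintype.linearIndependent_iff]
  intro c hc
  have vandermonde_relation (j : Fin m) : ∑ k : Fin m, lam j ^ (k : ℕ) * c k = 0 := by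
    have h := dotProduct_sum_smul_pow_mulVec (heig j) b c (fun k => (k : ℕ))
    rw [hc, dotProduct_zero] at h
    exact (mul_eq_zero.mp h.symm).resolve_right (hb j)
  exact congrFun (eq_zero_of_forall_index_sum_pow_mul_eq_zero hlam vandermonde_relation)

theorem stmt_10_general [Field K] [Infinite K] {m : ℕ} (A : Matrix ι ι K) {lam : Fin m → K}
    {w : Fin m → ι → K} (hlam : Function.Injective lam) (heig : ∀ j, w j ᵥ* A = lam j • w j)
    {S : Set ι} (hS : ∀ j, ∃ k ∈ S, w j k ≠ 0) :
    ∃ b : ι → K, Function.support b ⊆ S ∧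
      LinearIndependent K fun k : Fin m => A ^ (k : ℕ) *ᵥ b := by
  obtain ⟨b, hbS, hb⟩ := exists_support_subset_forall_dotProduct_ne_zero hS
  exact ⟨b, hbS, linearIndependent_pow_mulVec_of_dotProduct_ne_zero hlam heig hb⟩

end

/-- any (possibly non-minimal) set cover `S` of the supports of
the left eigenvectors of a matrix with distinct eigenvalues yields a vector `b`
supported in `S` such that `(A, b)` is controllable. -/
theorem stmt_10 {n : ℕ} (A : Matrix (Fin n) (Fin n) ℂ) (lam : Fin n → ℂ)
    (w : Fin n → Fin n → ℂ)
    (hdist : ∀ j j' : Fin n, j ≠ j' → lam j ≠ lam j')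
    (hw : ∀ j, w j ≠ 0)
    (heig : ∀ j, Matrix.vecMul (w j) A = lam j • w j)
    (S : Set (Fin n))
    (hS : ∀ j : Fin n, ∃ k ∈ S, w j k ≠ 0) :
    ∃ b : Fin n → ℂ, {i | b i ≠ 0} ⊆ S ∧ Controllable A b := by
  obtain ⟨b, hbS, hb⟩ := stmt_10_general A (fun j j' => not_imp_not.mp (hdist j j')) heig hS
  exact ⟨b, hbS, hb.span_eq_top_of_card_eq_finrank' (by simp)⟩
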